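/- Let k, α, θ ∈ ℝ and set A = sin(2α). Then Tr(U_XI(k))/2 equals (as a complex number, with real right-hand side coerced to ℂ): (A·(A + sin θ)/4)·(cos(4k) − 1) + ((1 − cos θ)/2)·cos(2k) + (1 + cos θ)/2. -/

import Mathlib

open Matrix Filter Topology

noncomputable def σx : Matrix (Fin 2) (Fin 2) ℂ := !![0, 1; 1, 0]
noncomputable def σy : Matrix (Fin 2) (Fin 2) ℂ := !![0, -Complex.I; Complex.I, 0]
noncomputable def σz : Matrix (Fin 2) (Fin 2) ℂ := !![1, 0; 0, -1]

/-- Rotation about the x-axis by angle `t`. -/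
noncomputable def Rx (t : ℝ) : Matrix (Fin 2) (Fin 2) ℂ :=
  !![(Real.cos (t/2) : ℂ), -Complex.I * Real.sin (t/2);
     -Complex.I * Real.sin (t/2), (Real.cos (t/2) : ℂ)]

/-- Rotation about the y-axis by angle `t`. -/
noncomputable def Ry (t : ℝ) : Matrix (Fin 2) (Fin 2) ℂ :=
  !![(Real.cos (t/2) : ℂ), -(Real.sin (t/2) : ℂ);
     (Real.sin (t/2) : ℂ), (Real.cos (t/2) : ℂ)]

/-- Rotation about the z-axis by angle `t`. -/
noncomputable def Rz (t : ℝ) : Matrix (Fin 2) (Fin 2) ℂ :=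
  !![Complex.exp (-(Complex.I * t) / 2), 0; 0, Complex.exp ((Complex.I * t) / 2)]

/-- Fourier-space shift operator at momentum `κ`. -/
noncomputable def Sh (κ : ℝ) : Matrix (Fin 2) (Fin 2) ℂ :=
  !![Complex.exp (Complex.I * κ), 0; 0, Complex.exp (-(Complex.I * κ))]

/-- The coin operator `Cα`. -/
noncomputable def Calpha (α : ℝ) : Matrix (Fin 2) (Fin 2) ℂ :=
  !![(Real.sin α : ℂ), -Complex.I * Real.cos α;
     Complex.I * Real.cos α, -(Real.sin α : ℂ)]

/-- The coin operator `Cβ`. -/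
noncomputable def Cbeta (α : ℝ) : Matrix (Fin 2) (Fin 2) ℂ :=
  !![-(Real.cos α : ℂ), -Complex.I * Real.sin α;
     -Complex.I * Real.sin α, -(Real.cos α : ℂ)]

/-- The massless homogeneous Y–Y twisted quantum walk unitary at momentum `k`,
coin angle `α` and twist angle `θ`: `U_YY = (W_β · W_α)²` with
`W_α = S(k)·Cα` and `W_β = R_y(−θ)·S(k)·R_y(θ)·Cβ`. -/
noncomputable def UYY (k α θ : ℝ) : Matrix (Fin 2) (Fin 2) ℂ :=
  (Ry (-θ) * Sh k * Ry θ * Cbeta α * (Sh k * Calpha α)) *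
    (Ry (-θ) * Sh k * Ry θ * Cbeta α * (Sh k * Calpha α))

/-- The massless alternate-twist walk unitary at momentum `k`, coin angle `α`
and twist angle `θ`: `U_XI = W_{β2} · W_α · W_{β1} · W_α` with `W_α = S(k)·Cα`,
`W_{β1} = R_x(−θ)·S(k)·R_x(θ)·Cβ` and `W_{β2} = S(k)·Cβ`. -/
noncomputable def UXI (k α θ : ℝ) : Matrix (Fin 2) (Fin 2) ℂ :=
  (Sh k * Cbeta α) * (Sh k * Calpha α) *
    (Rx (-θ) * Sh k * Rx θ * Cbeta α) * (Sh k * Calpha α)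

/-- The shift operator in trigonometric form. -/
theorem Sh_eq_cos_sin (k : ℝ) :
    Sh k = !![(Real.cos k : ℂ) + Complex.I * Real.sin k, 0;
      0, (Real.cos k : ℂ) - Complex.I * Real.sin k] := by
  have hpos : Complex.exp (Complex.I * k) = Real.cos k + Complex.I * Real.sin k := by
    rw [mul_comm, Complex.exp_mul_I]
    push_cast
    ring
  have hneg : Complex.exp (-(Complex.I * k)) = Real.cos k - Complex.I * Real.sin k := by
    rw [mul_comm, ← neg_mul, Complex.exp_mul_I, Complex.cos_neg, Complex.sin_neg]
    push_cast
    ring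
  rw [Sh, hpos, hneg]

/-- Conjugating the shift operator by a rotation about the x-axis. -/
theorem Rx_neg_mul_Sh_mul_Rx (k θ : ℝ) :
    Rx (-θ) * Sh k * Rx θ =
      !![(Real.cos k : ℂ) + Complex.I * Real.sin k * Real.cos θ,
          (Real.sin k : ℂ) * Real.sin θ;
        -((Real.sin k : ℂ) * Real.sin θ),
          (Real.cos k : ℂ) - Complex.I * Real.sin k * Real.cos θ] := by
  obtain ⟨t, rfl⟩ : ∃ t, θ = 2 * t := ⟨θ / 2, by ring⟩
  have hI := Complex.I_sq
  have ht : (Real.sin t : ℂ) ^ 2 + (Real.cos t : ℂ) ^ 2 = 1 := by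
    exact_mod_cast Real.sin_sq_add_cos_sq t
  have hhalf : 2 * t / 2 = t := by ring
  rw [Sh_eq_cos_sin, Real.sin_two_mul, Real.cos_two_mul', Rx, Rx, neg_div, hhalf,
    Real.cos_neg, Real.sin_neg]
  simp only [Complex.ofReal_neg, Complex.ofReal_mul, Complex.ofReal_sub,
    Complex.ofReal_pow, Complex.ofReal_ofNat]
  generalize (Real.sin t : ℂ) = s at *
  generalize (Real.cos t : ℂ) = c at *
  ext i j
  fin_cases i <;> fin_cases j <;> simp [Matrix.mul_apply, Fin.sum_univ_two] <;> grind

/-- Closed form of `Tr(U_XI)/2` for the alternate-twist walk. -/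
theorem trace_UXI_div_two (k α θ : ℝ) :
    (UXI k α θ).trace / 2 =
      (((Real.sin (2*α) * (Real.sin (2*α) + Real.sin θ) / 4) * (Real.cos (4*k) - 1)
        + ((1 - Real.cos θ) / 2) * Real.cos (2*k)
        + (1 + Real.cos θ) / 2 : ℝ) : ℂ) := by
  have hI := Complex.I_sq
  have hk : (Real.sin k : ℂ) ^ 2 + (Real.cos k : ℂ) ^ 2 = 1 := by
    exact_mod_cast Real.sin_sq_add_cos_sq k
  have hα : (Real.sin α : ℂ) ^ 2 + (Real.cos α : ℂ) ^ 2 = 1 := by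
    exact_mod_cast Real.sin_sq_add_cos_sq α
  have hk4 : Real.cos (4 * k) = 2 * (2 * Real.cos k ^ 2 - 1) ^ 2 - 1 := by
    rw [← Real.cos_two_mul, ← Real.cos_two_mul]
    ring_nf
  rw [UXI, Rx_neg_mul_Sh_mul_Rx, Sh_eq_cos_sin, Calpha, Cbeta, hk4, Real.sin_two_mul,
    Real.cos_two_mul k]
  simp only [Matrix.trace_fin_two, Matrix.mul_apply, Fin.sum_univ_two, Matrix.of_apply,
    Matrix.cons_val', Matrix.cons_val_zero, Matrix.cons_val_one, Matrix.cons_val_fin_one,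
    Complex.ofReal_add, Complex.ofReal_mul, Complex.ofReal_sub, Complex.ofReal_div,
    Complex.ofReal_pow, Complex.ofReal_ofNat, Complex.ofReal_one]
  generalize (Real.sin k : ℂ) = s at *
  generalize (Real.cos k : ℂ) = c at *
  generalize (Real.sin α : ℂ) = a at *
  generalize (Real.cos α : ℂ) = b at *
  grind
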